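/- Let Q be a well-3-moded query and C a well-3-moded clause that is variable disjoint from Q. Then every SLD-resolvent of Q and C is a well-3-moded query. -/

import Mathlib

/-- Finite first-order terms: variables and function applications.
A function symbol is identified by its name together with the number of
arguments it is applied to (fixed arity). -/
inductive Trm : Type where
  | var : ℕ → Trm
  | fn  : ℕ → List Trm → Trm

namespace Trm

/-- `|t|`: the number of occurrences of variables and function symbols
(including constants) in the term `t`. -/
def size : Trm → ℕ
  | .var _ => 1
  | .fn _ ts => 1 + (ts.attach.map (fun ⟨t, _⟩ => size t)).sum
decreasing_by
  have := List.sizeOf_lt_of_mem ‹_ ∈ ts›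
  simp [Trm.fn.sizeOf_spec]; omega

/-- Application of a substitution (a map from variables to terms) to a term. -/
def subst (σ : ℕ → Trm) : Trm → Trm
  | .var x => σ x
  | .fn f ts => .fn f (ts.attach.map (fun ⟨t, _⟩ => subst σ t))
decreasing_by
  have := List.sizeOf_lt_of_mem ‹_ ∈ ts›
  simp [Trm.fn.sizeOf_spec]; omega

/-- The number of occurrences of the variable `x` in a term. -/
def count (x : ℕ) : Trm → ℕ
  | .var y => if y = x then 1 else 0
  | .fn _ ts => (ts.attach.map (fun ⟨t, _⟩ => count x t)).sum
decreasing_by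
  have := List.sizeOf_lt_of_mem ‹_ ∈ ts›
  simp [Trm.fn.sizeOf_spec]; omega

/-- `Occurs x t` : the variable `x` occurs in the term `t`. -/
inductive Occurs (x : ℕ) : Trm → Prop where
  | var : Occurs x (.var x)
  | fn {f : ℕ} {ts : List Trm} {t : Trm} : t ∈ ts → Occurs x t → Occurs x (.fn f ts)

end Trm

/-- The set of variables occurring in a term. -/
def varSet (t : Trm) : Set ℕ := {x | Trm.Occurs x t}

/-- The set of variables occurring in a list (tuple) of terms. -/
def varsL (l : List Trm) : Set ℕ := {x | ∃ t ∈ l, Trm.Occurs x t}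

/-- The number of occurrences of a variable in a list (tuple) of terms. -/
def countL (x : ℕ) (l : List Trm) : ℕ := (l.map (Trm.count x)).sum

/-- A term is ground if no variable occurs in it. -/
def Ground (t : Trm) : Prop := ∀ x, ¬ Trm.Occurs x t

/-- An equation set: a set of equations `s ≐ t` between terms,
represented as pairs of terms. -/
abbrev EqSet := Set (Trm × Trm)

/-- `σ` is a solution (unifier) of the equation set `E`. -/
def Solves (σ : ℕ → Trm) (E : EqSet) : Prop :=
  ∀ e ∈ E, Trm.subst σ e.1 = Trm.subst σ e.2

/-- `E` is unifiable: it has a unifier. -/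
def Unifiable (E : EqSet) : Prop := ∃ σ, Solves σ E

/-- `θ` is a most general unifier of `E`. -/
def IsMgu (θ : ℕ → Trm) (E : EqSet) : Prop :=
  Solves θ E ∧ ∀ σ, Solves σ E → ∃ ρ, ∀ x, σ x = Trm.subst ρ (θ x)

/-- The equation set `s ≐̈ t` pairing corresponding members of two
equal-length tuples of terms. -/
def zipEqs (s t : List Trm) : EqSet := {e | e ∈ s.zip t}

/-- A 3-moded atom `p(s; t; u)`: a predicate symbol together with the tuples
of terms filling its input (+), output (−) and neutral (⊥) positions. -/
structure Atom3 where
  pred : ℕ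
  inp : List Trm
  out : List Trm
  neu : List Trm

/-- A query: a finite sequence of atoms. -/
abbrev Query3 := List Atom3

/-- A query `B1,…,Bn` is well-3-moded if for each `j` every variable
occurring in an input position of `Bj` occurs in an output position of some
`Bi` with `i < j`. -/
def Well3Query (Q : Query3) : Prop :=
  ∀ (j : ℕ) (hj : j < Q.length), ∀ x ∈ varsL (Q.get ⟨j, hj⟩).inp,
    ∃ (i : ℕ) (hi : i < j), x ∈ varsL (Q.get ⟨i, by omega⟩).out

/-- A clause `H ← B`: a head atom and a body query. -/
structure Clause3 where
  head : Atom3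
  body : Query3

/-- A clause `H ← B1,…,Bn` is well-3-moded if every variable occurring in an
output position of `H` has a defining occurrence in the clause (an
occurrence in an input position of `H` or in an output position of some body
atom), and, for each `j`, every variable occurring in an input position of
`Bj` occurs in an input position of `H` or in an output position of some
`Bi` with `i < j`. -/
def Well3Clause (C : Clause3) : Prop :=
  (∀ x ∈ varsL C.head.out,
      x ∈ varsL C.head.inp ∨ ∃ B ∈ C.body, x ∈ varsL B.out) ∧
  (∀ (j : ℕ) (hj : j < C.body.length), ∀ x ∈ varsL (C.body.get ⟨j, hj⟩).inp,
      x ∈ varsL C.head.inp ∨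
        ∃ (i : ℕ) (hi : i < j), x ∈ varsL (C.body.get ⟨i, by omega⟩).out)

/-- The variables of a 3-moded atom. -/
def Atom3.vars (A : Atom3) : Set ℕ := varsL (A.inp ++ A.out ++ A.neu)

/-- The variables of a query. -/
def query3Vars (Q : Query3) : Set ℕ := {x | ∃ A ∈ Q, x ∈ A.vars}

/-- The variables of a clause. -/
def clause3Vars (C : Clause3) : Set ℕ := C.head.vars ∪ query3Vars C.body

/-- Application of a substitution to a 3-moded atom. -/
def Atom3.subst (σ : ℕ → Trm) (A : Atom3) : Atom3 :=
  ⟨A.pred, A.inp.map (Trm.subst σ), A.out.map (Trm.subst σ),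
    A.neu.map (Trm.subst σ)⟩

/-- Application of a substitution to a query. -/
def Query3.subst (σ : ℕ → Trm) (Q : Query3) : Query3 := Q.map (Atom3.subst σ)

/-- The equation set pairing the corresponding argument terms of two atoms
(with the same predicate symbol). -/
def atom3Eqs (A H : Atom3) : EqSet :=
  zipEqs (A.inp ++ A.out ++ A.neu) (H.inp ++ H.out ++ H.neu)

/-- The SLD-resolvent of the query `Q`, with selected atom at position `i`,
and the clause `C`, via the mgu `θ`: `(A1,…,Ai−1, B, Ai+1,…,An)θ`. -/
def Resolvent3 (Q : Query3) (i : ℕ) (C : Clause3) (θ : ℕ → Trm) : Query3 :=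
  Query3.subst θ (Q.take i ++ C.body ++ Q.drop (i + 1))

/-!
Well-3-modedness is stable under substitution, for queries and for clauses. Let `C` be `H ← B`. If
`θ` equates the input and output tuples of the selected atom `A` with those of `H`, then passing
from `Qθ` to the resolvent replaces `Aθ` by `Bθ`. The atoms before `Aθ` define its input variables,
which are those of `Hθ`; this is all that `Bθ` needs from outside. The output variables of `Aθ`,
on which later atoms may rely, are those of `Hθ`, so they are defined by these atoms and `Bθ`.
-/

namespace Trm

theorem induction_on {P : Trm → Prop} (t : Trm) (var : ∀ x, P (.var x))
    (fn : ∀ f ts, (∀ t ∈ ts, P t) → P (.fn f ts)) : P t :=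
  match t with
  | .var x => var x
  | .fn f ts => fn f ts fun t _ => induction_on t var fn

theorem subst_fn (σ : ℕ → Trm) (f : ℕ) (ts : List Trm) :
    subst σ (.fn f ts) = .fn f (ts.map (subst σ)) := by
  rw [subst]
  exact congrArg (fn f) List.attach_map_val

end Trm

theorem varSet_var (x : ℕ) : varSet (.var x) = {x} := by
  ext y
  refine ⟨fun h => ?_, ?_⟩
  · cases h
    rfl
  · rintro rfl
    exact .var

theorem varSet_fn (f : ℕ) (ts : List Trm) : varSet (.fn f ts) = varsL ts := by
  ext x
  refine ⟨fun h => ?_, fun ⟨_, ht, hx⟩ => .fn ht hx⟩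
  cases h with
  | fn ht hx => exact ⟨_, ht, hx⟩

theorem varsL_eq_biUnion (l : List Trm) : varsL l = ⋃ t ∈ l, varSet t := by
  ext x
  simp [varsL, varSet]

/-- The variables of the terms `θ y` for `y ∈ S`: these are the variables of `tθ` when `S` is the
set of variables of `t`. -/
def imageVars (θ : ℕ → Trm) (S : Set ℕ) : Set ℕ := ⋃ y ∈ S, varSet (θ y)

section imageVars

variable (θ : ℕ → Trm)

theorem imageVars_empty : imageVars θ ∅ = ∅ := Set.biUnion_empty _

theorem imageVars_union (S T : Set ℕ) :
    imageVars θ (S ∪ T) = imageVars θ S ∪ imageVars θ T := Set.biUnion_union S T _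

theorem imageVars_mono {S T : Set ℕ} (h : S ⊆ T) : imageVars θ S ⊆ imageVars θ T :=
  Set.biUnion_subset_biUnion_left h

theorem imageVars_varsL (l : List Trm) :
    imageVars θ (varsL l) = ⋃ t ∈ l, imageVars θ (varSet t) := by
  simp only [imageVars, varsL_eq_biUnion, Set.biUnion_iUnion]

theorem varSet_subst (t : Trm) : varSet (t.subst θ) = imageVars θ (varSet t) := by
  induction t using Trm.induction_on with
  | var x => rw [Trm.subst, varSet_var, imageVars, Set.biUnion_singleton]
  | fn f ts ih =>
    calc varSet ((Trm.fn f ts).subst θ)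
        = ⋃ t ∈ ts, varSet (t.subst θ) := by
          rw [Trm.subst_fn, varSet_fn, varsL_eq_biUnion]
          simp only [List.mem_map, Set.iUnion_exists, Set.biUnion_and', Set.iUnion_iUnion_eq_right]
      _ = ⋃ t ∈ ts, imageVars θ (varSet t) := Set.iUnion₂_congr ih
      _ = imageVars θ (varSet (.fn f ts)) := by rw [varSet_fn, imageVars_varsL]

theorem varsL_map_subst (l : List Trm) :
    varsL (l.map (Trm.subst θ)) = imageVars θ (varsL l) := by
  rw [← varSet_fn 0, ← Trm.subst_fn, varSet_subst, varSet_fn]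

end imageVars

/-- The variables occurring in output positions of a query. -/
def Query3.outVars (Q : Query3) : Set ℕ := {x | ∃ B ∈ Q, x ∈ varsL B.out}

namespace Query3

theorem outVars_nil : outVars [] = ∅ := by
  simp [outVars]

theorem outVars_cons (A : Atom3) (Q : Query3) : outVars (A :: Q) = varsL A.out ∪ outVars Q := by
  ext x
  simp [outVars]

theorem outVars_subst (θ : ℕ → Trm) (Q : Query3) :
    outVars (Query3.subst θ Q) = imageVars θ (outVars Q) := by
  induction Q with
  | nil => rw [Query3.subst, List.map_nil, outVars_nil, imageVars_empty]
  | cons A Q ih =>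
    calc outVars (Query3.subst θ (A :: Q))
        = varsL (A.out.map (Trm.subst θ)) ∪ outVars (Query3.subst θ Q) := outVars_cons _ _
      _ = imageVars θ (outVars (A :: Q)) := by
        rw [varsL_map_subst, ih, outVars_cons, imageVars_union]

end Query3

/-- Well-3-modedness of a query relative to a set `S` of variables that count as defined before its
first atom: `S` is empty for a query, and consists of the input variables of the head for the body
of a clause. -/
def Well3QueryFrom (S : Set ℕ) : Query3 → Prop
  | [] => True
  | A :: Q => varsL A.inp ⊆ S ∧ Well3QueryFrom (S ∪ varsL A.out) Q

theorem well3QueryFrom_iff {S : Set ℕ} {Q : Query3} : Well3QueryFrom S Q ↔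
    ∀ (j : ℕ) (hj : j < Q.length), ∀ x ∈ varsL (Q.get ⟨j, hj⟩).inp,
      x ∈ S ∨ ∃ (i : ℕ) (hi : i < j), x ∈ varsL (Q.get ⟨i, by omega⟩).out := by
  induction Q generalizing S with
  | nil => simp [Well3QueryFrom]
  | cons A Q ih =>
    rw [Well3QueryFrom, ih]
    constructor
    · rintro ⟨hA, hQ⟩ (_ | j) hj x hx
      · exact .inl (hA hx)
      · obtain (hS | hout) | ⟨i, hi, hout⟩ := hQ j (by simpa using hj) x hx
        · exact .inl hS
        · exact .inr ⟨0, by omega, hout⟩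
        · exact .inr ⟨i + 1, by omega, hout⟩
    · refine fun h => ⟨fun x hx => ?_, fun j hj x hx => ?_⟩
      · exact (h 0 (by simp) x hx).resolve_right fun ⟨_, hi, _⟩ => absurd hi (Nat.not_lt_zero _)
      · obtain hS | ⟨_ | i, hi, hout⟩ := h (j + 1) (by simpa using hj) x hx
        · exact .inl (.inl hS)
        · exact .inl (.inr hout)
        · exact .inr ⟨i, by omega, hout⟩

theorem well3Query_iff {Q : Query3} : Well3Query Q ↔ Well3QueryFrom ∅ Q := by
  simp only [well3QueryFrom_iff, Set.mem_empty_iff_false, false_or, Well3Query]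

theorem well3Clause_iff {C : Clause3} : Well3Clause C ↔
    varsL C.head.out ⊆ varsL C.head.inp ∪ C.body.outVars ∧
      Well3QueryFrom (varsL C.head.inp) C.body := by
  rw [well3QueryFrom_iff]
  rfl

theorem well3QueryFrom_append {S : Set ℕ} {P R : Query3} :
    Well3QueryFrom S (P ++ R) ↔ Well3QueryFrom S P ∧ Well3QueryFrom (S ∪ P.outVars) R := by
  induction P generalizing S with
  | nil => simp [Well3QueryFrom, Query3.outVars_nil]
  | cons A P ih =>
    simp only [List.cons_append, Well3QueryFrom, ih, Query3.outVars_cons, Set.union_assoc,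
      and_assoc]

theorem Well3QueryFrom.mono {S T : Set ℕ} {Q : Query3} (hST : S ⊆ T) (h : Well3QueryFrom S Q) :
    Well3QueryFrom T Q := by
  induction Q generalizing S T with
  | nil => trivial
  | cons A Q ih => exact ⟨h.1.trans hST, ih (Set.union_subset_union_left _ hST) h.2⟩

theorem Well3QueryFrom.subst (θ : ℕ → Trm) {S : Set ℕ} {Q : Query3} (h : Well3QueryFrom S Q) :
    Well3QueryFrom (imageVars θ S) (Query3.subst θ Q) := by
  induction Q generalizing S with
  | nil => trivial
  | cons A Q ih =>
    refine ⟨(varsL_map_subst θ A.inp).trans_subset (imageVars_mono θ h.1), ?_⟩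
    have hQ := ih h.2
    rwa [imageVars_union, ← varsL_map_subst] at hQ

theorem Well3Query.subst (θ : ℕ → Trm) {Q : Query3} (h : Well3Query Q) :
    Well3Query (Query3.subst θ Q) := by
  have hθ := (well3Query_iff.1 h).subst θ
  rwa [imageVars_empty, ← well3Query_iff] at hθ

/-- Application of a substitution to a clause. -/
def Clause3.subst (θ : ℕ → Trm) (C : Clause3) : Clause3 :=
  ⟨C.head.subst θ, Query3.subst θ C.body⟩

theorem Well3Clause.subst (θ : ℕ → Trm) {C : Clause3} (h : Well3Clause C) :
    Well3Clause (C.subst θ) := by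
  obtain ⟨hout, hbody⟩ := well3Clause_iff.1 h
  simp only [well3Clause_iff, Clause3.subst, Atom3.subst, varsL_map_subst, Query3.outVars_subst,
    ← imageVars_union]
  exact ⟨imageVars_mono θ hout, hbody.subst θ⟩

theorem Well3QueryFrom.replace_atom {S : Set ℕ} {P R : Query3} {A : Atom3} {C : Clause3}
    (hQ : Well3QueryFrom S (P ++ A :: R)) (hC : Well3Clause C)
    (hinp : varsL C.head.inp ⊆ varsL A.inp) (hout : varsL A.out ⊆ varsL C.head.out) :
    Well3QueryFrom S (P ++ C.body ++ R) := by
  obtain ⟨hP, hA, hR⟩ := well3QueryFrom_append.1 hQ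
  obtain ⟨hH, hB⟩ := well3Clause_iff.1 hC
  have hHP : varsL C.head.inp ⊆ S ∪ P.outVars := hinp.trans hA
  have hAB : varsL A.out ⊆ S ∪ P.outVars ∪ C.body.outVars :=
    hout.trans (hH.trans (Set.union_subset_union_left _ hHP))
  rw [List.append_assoc, well3QueryFrom_append, well3QueryFrom_append]
  exact ⟨hP, hB.mono hHP, hR.mono (Set.union_subset Set.subset_union_left hAB)⟩

theorem Solves.map_subst_eq {θ : ℕ → Trm} {s t : List Trm} (h : Solves θ (zipEqs s t))
    (hlen : s.length = t.length) : s.map (Trm.subst θ) = t.map (Trm.subst θ) :=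
  calc s.map (Trm.subst θ)
      = (s.zip t).map (Trm.subst θ ∘ Prod.fst) := by
        rw [← List.map_map, List.map_fst_zip hlen.le]
    _ = (s.zip t).map (Trm.subst θ ∘ Prod.snd) := List.map_congr_left h
    _ = t.map (Trm.subst θ) := by
        rw [← List.map_map, List.map_snd_zip hlen.ge]

theorem zipEqs_append {s s' t t' : List Trm} (hlen : s.length = t.length) :
    zipEqs (s ++ s') (t ++ t') = zipEqs s t ∪ zipEqs s' t' := by
  ext e
  simp only [zipEqs, List.zip_append hlen, List.mem_append, Set.mem_union, Set.mem_ofPred_eq]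

theorem Solves.map_subst_inp_eq_and_out_eq {θ : ℕ → Trm} {A H : Atom3}
    (h : Solves θ (atom3Eqs A H)) (hinp : A.inp.length = H.inp.length)
    (hout : A.out.length = H.out.length) :
    A.inp.map (Trm.subst θ) = H.inp.map (Trm.subst θ) ∧
      A.out.map (Trm.subst θ) = H.out.map (Trm.subst θ) := by
  rw [atom3Eqs, List.append_assoc, List.append_assoc, zipEqs_append hinp, zipEqs_append hout] at h
  have hsolves_inp : Solves θ (zipEqs A.inp H.inp) := fun e he => h e (.inl he)
  have hsolves_out : Solves θ (zipEqs A.out H.out) := fun e he => h e (.inr (.inl he))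
  exact ⟨hsolves_inp.map_subst_eq hinp, hsolves_out.map_subst_eq hout⟩

theorem stmt14_general (Q : Query3) (C : Clause3) (hQ : Well3Query Q) (hC : Well3Clause C)
    (i : ℕ) (hi : i < Q.length) (θ : ℕ → Trm)
    (hinp : (Q.get ⟨i, hi⟩).inp.map (Trm.subst θ) = C.head.inp.map (Trm.subst θ))
    (hout : (Q.get ⟨i, hi⟩).out.map (Trm.subst θ) = C.head.out.map (Trm.subst θ)) :
    Well3Query (Resolvent3 Q i C θ) := by
  have hsplit : Query3.subst θ Q = Query3.subst θ (Q.take i) ++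
      (Q.get ⟨i, hi⟩).subst θ :: Query3.subst θ (Q.drop (i + 1)) := by
    simp only [Query3.subst, List.get_eq_getElem, ← List.map_cons, ← List.map_append,
      List.getElem_cons_drop, List.take_append_drop]
  have hresolvent : Resolvent3 Q i C θ = Query3.subst θ (Q.take i) ++
      (C.subst θ).body ++ Query3.subst θ (Q.drop (i + 1)) := by
    simp only [Resolvent3, Clause3.subst, Query3.subst, List.map_append]
  have hQθ := well3Query_iff.1 (hQ.subst θ)
  rw [hsplit] at hQθ
  rw [hresolvent, well3Query_iff]
  exact hQθ.replace_atom (hC.subst θ) (congrArg varsL hinp).ge (congrArg varsL hout).le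

/-- Let `Q` be a well-3-moded query and `C` a well-3-moded clause that is
variable disjoint from `Q`.  Then every SLD-resolvent of `Q` and `C` is a
well-3-moded query. -/
theorem stmt14 (Q : Query3) (C : Clause3)
    (hQ : Well3Query Q) (hC : Well3Clause C)
    (hdisj : query3Vars Q ∩ clause3Vars C = ∅)
    (i : ℕ) (hi : i < Q.length)
    (hpred : (Q.get ⟨i, hi⟩).pred = C.head.pred)
    (hlen_in : (Q.get ⟨i, hi⟩).inp.length = C.head.inp.length)
    (hlen_out : (Q.get ⟨i, hi⟩).out.length = C.head.out.length)
    (hlen_neu : (Q.get ⟨i, hi⟩).neu.length = C.head.neu.length)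
    (θ : ℕ → Trm) (hθ : IsMgu θ (atom3Eqs (Q.get ⟨i, hi⟩) C.head)) :
    Well3Query (Resolvent3 Q i C θ) := by
  obtain ⟨hinp, hout⟩ := hθ.1.map_subst_inp_eq_and_out_eq hlen_in hlen_out
  exact stmt14_general Q C hQ hC i hi θ hinp hout
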